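/- Let $P_n$ denote the number of partitions of the vertex set of the $n\times n$ grid graph into $n$ parts, each of size $n$ and each inducing a connected subgraph. Then there exist real constants $1 < c \le C$ and $N$ such that for all $n \ge N$, $c^{n^2} \le P_n \le C^{n^2}$; in particular, $P_n$ grows exponentially in $n^2$. -/

import Mathlib

open Filter

/-- The `n × n` grid graph: vertices are pairs in `Fin n × Fin n`, adjacent iff they agree
in one coordinate and differ by exactly 1 in the other. -/
def gridGraph (n : ℕ) : SimpleGraph (Fin n × Fin n) :=
  SimpleGraph.fromRel (fun a b =>
    (a.1 = b.1 ∧ (a.2 : ℕ) + 1 = (b.2 : ℕ)) ∨ (a.2 = b.2 ∧ (a.1 : ℕ) + 1 = (b.1 : ℕ)))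

/-- `P` is a partition of the vertex set of the `n × n` grid graph into `n` parts,
each of size `n` and each inducing a connected subgraph. -/
def IsGridPartition (n : ℕ) (P : Finset (Finset (Fin n × Fin n))) : Prop :=
  P.card = n ∧
  (∀ s ∈ P, s.card = n) ∧
  (∀ s ∈ P, ((gridGraph n).induce (↑s : Set (Fin n × Fin n))).Connected) ∧
  (∀ v : Fin n × Fin n, ∃! s, s ∈ P ∧ v ∈ s)

/-- The number of partitions of the `n × n` grid graph into `n` connected parts of size `n`. -/
noncomputable def gridPartitionCount (n : ℕ) : ℕ :=
  Nat.card {P : Finset (Finset (Fin n × Fin n)) // IsGridPartition n P}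

/-- The cut score of a partition: the number of edges of the grid graph whose two endpoints
lie in different parts. -/
noncomputable def cutScore (n : ℕ) (P : Finset (Finset (Fin n × Fin n))) : ℕ :=
  {e ∈ (gridGraph n).edgeSet | ¬ ∃ s ∈ P, ∀ v ∈ e, v ∈ s}.ncard

/-! The internal edges of a partition into connected parts determine the partition, and the grid
has at most `2 * n ^ 2` edges, so `P_n ≤ 2 ^ (2 * n ^ 2)`.

For the lower bound, start from the partition into rows and group the first `3 * q` rows,
`q = n / 3`, into `q` horizontal strips of height three. In each strip the first `2 * q` cells of
the middle row are exchanged with the last `q` cells of the top row and of the bottom row: the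
middle cells `i` and `q + i` are given to the two outer rows, one each, as teeth of two combs, and
the outer rows pay with their cells in column `n - q + i`. Which outer row takes which of the two
cells is a free choice for each strip and each `i < q`, so `P_n ≥ 2 ^ (q ^ 2)`. -/

section ConnectedPartition

variable {V : Type*} {G : SimpleGraph V}

/-- A partition of the vertex set of `G` into parts inducing connected subgraphs, as a finite
family of finite sets. Nonemptiness of the parts is included in connectedness. -/
def IsConnectedPartition (G : SimpleGraph V) (P : Finset (Finset V)) : Prop :=
  (∀ s ∈ P, (G.induce (s : Set V)).Connected) ∧ ∀ v, ∃! s, s ∈ P ∧ v ∈ s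

/-- The edges of `G` with both endpoints in the same part of `P`, that is, the edges not cut
by `P`. -/
def internalEdges (G : SimpleGraph V) (P : Finset (Finset V)) : Set (Sym2 V) :=
  {e ∈ G.edgeSet | ∃ s ∈ P, ∀ v ∈ e, v ∈ s}

lemma forall_mem_of_induce_preconnected {s : Set V} (hs : (G.induce s).Preconnected)
    {p : V → Prop} {v : V} (hv : v ∈ s) (hpv : p v)
    (hp : ∀ x ∈ s, ∀ y ∈ s, G.Adj x y → p x → p y) : ∀ w ∈ s, p w := by
  suffices h : ∀ w : s, p w from fun w hw => h ⟨w, hw⟩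
  intro w
  have hvw := (SimpleGraph.reachable_iff_reflTransGen _ _).1 (hs ⟨v, hv⟩ w)
  induction hvw with
  | refl => exact hpv
  | tail _ hxy hpx => exact hp _ (Subtype.prop _) _ (Subtype.prop _) hxy hpx

lemma IsConnectedPartition.subset_of_internalEdges_subset {P Q : Finset (Finset V)}
    (hP : IsConnectedPartition G P) (hQ : IsConnectedPartition G Q)
    (hPQ : internalEdges G P ⊆ internalEdges G Q) {s t : Finset V} (hs : s ∈ P) (ht : t ∈ Q)
    {v : V} (hvs : v ∈ s) (hvt : v ∈ t) : s ⊆ t := by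
  refine forall_mem_of_induce_preconnected (hP.1 s hs).preconnected hvs hvt ?_
  intro x hx y hy hxy hxt
  have hxyP : s(x, y) ∈ internalEdges G P := ⟨hxy, s, hs, Sym2.ball.2 ⟨hx, hy⟩⟩
  obtain ⟨-, u, hu, hxyu⟩ := hPQ hxyP
  obtain ⟨hxu, hyu⟩ := Sym2.ball.1 hxyu
  have hut : u = t := (hQ.2 x).unique ⟨hu, hxu⟩ ⟨ht, hxt⟩
  exact hut ▸ hyu

lemma IsConnectedPartition.subset_of_internalEdges_eq {P Q : Finset (Finset V)}
    (hP : IsConnectedPartition G P) (hQ : IsConnectedPartition G Q)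
    (hPQ : internalEdges G P = internalEdges G Q) : P ⊆ Q := by
  intro s hs
  obtain ⟨v, hvs⟩ := (hP.1 s hs).nonempty
  obtain ⟨t, ⟨ht, hvt⟩, -⟩ := hQ.2 v
  have hst : s = t := (hP.subset_of_internalEdges_subset hQ hPQ.subset hs ht hvs hvt).antisymm
    (hQ.subset_of_internalEdges_subset hP hPQ.superset ht hs hvt hvs)
  exact hst ▸ ht

lemma injOn_internalEdges (G : SimpleGraph V) :
    Set.InjOn (internalEdges G) {P | IsConnectedPartition G P} := fun _ hP _ hQ hPQ =>
  (hP.subset_of_internalEdges_eq hQ hPQ).antisymm (hQ.subset_of_internalEdges_eq hP hPQ.symm)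

lemma ncard_isConnectedPartition_le [Finite V] (G : SimpleGraph V) :
    {P | IsConnectedPartition G P}.ncard ≤ 2 ^ G.edgeSet.ncard := by
  rw [← Set.ncard_powerset]
  exact Set.ncard_le_ncard_of_injOn (internalEdges G) (fun _ _ => Set.sep_subset _ _)
    (injOn_internalEdges G)

lemma ncard_edgeSet_fromRel_le [Finite V] (r : V → V → Prop) :
    (SimpleGraph.fromRel r).edgeSet.ncard ≤ {p : V × V | r p.1 p.2}.ncard := by
  have hsub : (SimpleGraph.fromRel r).edgeSet ⊆ Sym2.mk.uncurry '' {p : V × V | r p.1 p.2} := by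
    rintro ⟨a, b⟩ ⟨-, hab | hba⟩
    · exact ⟨(a, b), hab, rfl⟩
    · exact ⟨(b, a), hba, Sym2.eq_swap⟩
  exact (Set.ncard_le_ncard hsub).trans (Set.ncard_image_le (Set.toFinite _))

end ConnectedPartition

lemma gridPartitionCount_eq_ncard (n : ℕ) :
    gridPartitionCount n = {P | IsGridPartition n P}.ncard :=
  rfl

lemma IsGridPartition.isConnectedPartition {n : ℕ} {P : Finset (Finset (Fin n × Fin n))}
    (hP : IsGridPartition n P) : IsConnectedPartition (gridGraph n) P :=
  hP.2.2

lemma ncard_edgeSet_gridGraph_le (n : ℕ) : (gridGraph n).edgeSet.ncard ≤ 2 * n ^ 2 := by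
  let right : Set ((Fin n × Fin n) × (Fin n × Fin n)) :=
    {p | p.1.1 = p.2.1 ∧ (p.1.2 : ℕ) + 1 = p.2.2}
  let up : Set ((Fin n × Fin n) × (Fin n × Fin n)) :=
    {p | p.1.2 = p.2.2 ∧ (p.1.1 : ℕ) + 1 = p.2.1}
  have hcard : (Set.univ : Set (Fin n × Fin n)).ncard = n ^ 2 := by simp [Set.ncard_univ, sq]
  have hright : right.ncard ≤ n ^ 2 := hcard ▸ Set.ncard_le_ncard_of_injOn Prod.fst
    (fun _ _ => Set.mem_univ _) (by grind [Set.InjOn])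
  have hup : up.ncard ≤ n ^ 2 := hcard ▸ Set.ncard_le_ncard_of_injOn Prod.fst
    (fun _ _ => Set.mem_univ _) (by grind [Set.InjOn])
  calc (gridGraph n).edgeSet.ncard
      ≤ (right ∪ up).ncard := ncard_edgeSet_fromRel_le _
    _ ≤ right.ncard + up.ncard := Set.ncard_union_le _ _
    _ ≤ 2 * n ^ 2 := by omega

lemma gridPartitionCount_le (n : ℕ) : gridPartitionCount n ≤ 4 ^ n ^ 2 :=
  calc gridPartitionCount n
      = {P | IsGridPartition n P}.ncard := gridPartitionCount_eq_ncard n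
    _ ≤ {P | IsConnectedPartition (gridGraph n) P}.ncard :=
        Set.ncard_le_ncard fun _ => IsGridPartition.isConnectedPartition
    _ ≤ 2 ^ (gridGraph n).edgeSet.ncard := ncard_isConnectedPartition_le _
    _ ≤ 2 ^ (2 * n ^ 2) := Nat.pow_le_pow_right two_pos (ncard_edgeSet_gridGraph_le n)
    _ = 4 ^ n ^ 2 := pow_mul 2 2 _

section Fibers

variable {V ι : Type*} [Fintype V] [Fintype ι] [DecidableEq V] [DecidableEq ι]

/-- The family of colour classes of a colouring `f`. An unused colour contributes the empty
set. -/
def fibers (f : V → ι) : Finset (Finset V) :=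
  Finset.univ.image fun i => Finset.univ.filter (f · = i)

lemma forall_mem_fibers {f : V → ι} {p : Finset V → Prop} :
    (∀ s ∈ fibers f, p s) ↔ ∀ i, p (Finset.univ.filter (f · = i)) := by
  simp [fibers]

lemma existsUnique_mem_fibers (f : V → ι) (v : V) : ∃! s, s ∈ fibers f ∧ v ∈ s := by
  refine ⟨Finset.univ.filter (f · = f v), by simp [fibers], ?_⟩
  rintro s ⟨hs, hv⟩
  obtain ⟨i, -, rfl⟩ := Finset.mem_image.1 hs
  rw [(Finset.mem_filter.1 hv).2]

lemma exists_mem_fibers_iff {f : V → ι} {x y : V} :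
    (∃ s ∈ fibers f, x ∈ s ∧ y ∈ s) ↔ f x = f y := by
  simp [fibers, eq_comm]

lemma card_fibers {f : V → ι} (hf : f.Surjective) : (fibers f).card = Fintype.card ι := by
  refine Finset.card_image_of_injective _ fun i j hij => ?_
  obtain ⟨v, rfl⟩ := hf i
  have hv : v ∈ Finset.univ.filter (f · = j) := hij ▸ by simp
  exact (Finset.mem_filter.1 hv).2

end Fibers

lemma card_filter_fst_perm_eq {α β : Type*} [Fintype α] [Fintype β] [DecidableEq α]
    (σ : Equiv.Perm (α × β)) (a : α) :
    (Finset.univ.filter fun v => (σ v).1 = a).card = Fintype.card β := by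
  have hmap : (Finset.univ.filter fun v => (σ v).1 = a) =
      (({a} : Finset α) ×ˢ (Finset.univ : Finset β)).map σ.symm.toEmbedding := by
    ext v
    rw [Finset.mem_map_equiv, Finset.mem_product]
    simp
  simp [hmap]

section Connectivity

lemma induce_connected_of_dominating {V : Type*} {G : SimpleGraph V} {s t : Set V}
    (hs : (G.induce s).Connected) (hst : s ⊆ t) (ht : ∀ v ∈ t, v ∉ s → ∃ w ∈ s, G.Adj w v) :
    (G.induce t).Connected := by
  obtain ⟨u, hu⟩ := hs.nonempty
  refine G.induce_connected_of_patches u (hst hu) fun {v} hv => ?_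
  by_cases hvs : v ∈ s
  · exact ⟨s, hst, hu, hvs, hs.preconnected _ _⟩
  · obtain ⟨w, hw, hwv⟩ := ht v hv hvs
    have hconn : (G.induce (s ∪ {w, v})).Connected := G.induce_union_connected hs.preconnected
      (G.induce_pair_connected_of_adj hwv).preconnected ⟨w, hw, by simp⟩
    exact ⟨s ∪ {w, v}, Set.union_subset hst (by simp [Set.pair_subset_iff, hst hw, hv]),
      Or.inl hu, by simp, hconn.preconnected _ _⟩

lemma hasse_induce_connected {α : Type*} [LinearOrder α] [SuccOrder α] [IsSuccArchimedean α]
    {I : Set α} (hI : I.OrdConnected) (hne : I.Nonempty) :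
    ((SimpleGraph.hasse α).induce I).Connected := by
  have := hne.to_subtype
  have hcov (x y : I) : x.1 ⋖ y.1 ↔ x ⋖ y := Set.OrdConnected.apply_covBy_apply_iff
    (OrderEmbedding.subtype (· ∈ I)) (by simpa using hI)
  have hG : (SimpleGraph.hasse α).induce I = SimpleGraph.hasse I := by
    ext x y
    simp [SimpleGraph.hasse_adj, hcov]
  rw [hG]
  exact ⟨SimpleGraph.hasse_preconnected_of_succ I⟩

variable {n : ℕ}

lemma gridGraph_adj_iff {v w : Fin n × Fin n} :
    (gridGraph n).Adj v w ↔
      v.1 = w.1 ∧ ((v.2 : ℕ) + 1 = w.2 ∨ (w.2 : ℕ) + 1 = v.2) ∨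
      v.2 = w.2 ∧ ((v.1 : ℕ) + 1 = w.1 ∨ (w.1 : ℕ) + 1 = v.1) := by
  simp only [gridGraph, SimpleGraph.fromRel_adj]
  grind

lemma gridGraph_induce_row_connected (r : Fin n) {I : Set (Fin n)} (hI : I.OrdConnected)
    (hne : I.Nonempty) : ((gridGraph n).induce ({r} ×ˢ I)).Connected := by
  let toRow : (SimpleGraph.pathGraph n).induce I →g (gridGraph n).induce ({r} ×ˢ I) :=
    { toFun := fun c => ⟨(r, c), rfl, c.2⟩
      map_rel' := fun h => gridGraph_adj_iff.2 (Or.inl ⟨rfl, SimpleGraph.pathGraph_adj.1 h⟩) }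
  have htoRow : Function.Surjective toRow := by
    rintro ⟨⟨_, c⟩, rfl, hc⟩
    exact ⟨⟨c, hc⟩, rfl⟩
  exact (hasse_induce_connected hI hne).map toRow htoRow

lemma gridGraph_induce_comb_connected {r : Fin n} {s : Set (Fin n × Fin n)}
    (hspine : {c | (r, c) ∈ s}.OrdConnected) (hne : ∃ c, (r, c) ∈ s)
    (hteeth : ∀ v ∈ s, v.1 ≠ r → (r, v.2) ∈ s ∧ ((r : ℕ) + 1 = v.1 ∨ (v.1 : ℕ) + 1 = r)) :
    ((gridGraph n).induce s).Connected := by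
  refine induce_connected_of_dominating (gridGraph_induce_row_connected r hspine hne) ?_ ?_
  · rintro ⟨_, c⟩ ⟨rfl, hc⟩
    exact hc
  · intro v hv hvspine
    have hvr : v.1 ≠ r := fun h => hvspine ⟨h, by simpa [← h] using hv⟩
    obtain ⟨hrs, hadj⟩ := hteeth v hv hvr
    exact ⟨(r, v.2), ⟨rfl, hrs⟩, gridGraph_adj_iff.2 (Or.inr ⟨rfl, hadj⟩)⟩

lemma isGridPartition_fibers {f : Fin n × Fin n → Fin n}
    (hcard : ∀ l, (Finset.univ.filter (f · = l)).card = n)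
    (hconn : ∀ l, ((gridGraph n).induce (Finset.univ.filter (f · = l) : Finset _)).Connected) :
    IsGridPartition n (fibers f) := by
  have hsurj : f.Surjective := fun l => by
    obtain ⟨v, hv⟩ := (hconn l).nonempty
    exact ⟨v, by simpa using hv⟩
  exact ⟨(card_fibers hsurj).trans (Fintype.card_fin n), forall_mem_fibers.2 hcard,
    forall_mem_fibers.2 hconn, existsUnique_mem_fibers f⟩

end Connectivity

section CombSwap

variable {n q : ℕ}

/-- The exchange of cells behind the comb partitions, as a map of (row, column) pairs. Strip `j`
consists of the rows `3 * j`, `3 * j + 1`, `3 * j + 2`. In its middle row the cells `i` and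
`q + i`, `i < q`, are exchanged with the cells in column `n - q + i` of the two outer rows: cell
`i` with the row `3 * j` if `(j, i) ∈ S` and with the row `3 * j + 2` otherwise, and cell `q + i`
with the other one. All other cells are fixed. -/
def combSwap (n q : ℕ) (S : Finset (ℕ × ℕ)) (r c : ℕ) : ℕ × ℕ :=
  if 3 * q ≤ r then (r, c)
  else if r % 3 = 1 then
    if c < q then (if (r / 3, c) ∈ S then r - 1 else r + 1, n - q + c)
    else if c < 2 * q then (if (r / 3, c - q) ∈ S then r + 1 else r - 1, n - q + (c - q))
    else (r, c)
  else if c < n - q then (r, c)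
  else (3 * (r / 3) + 1,
    if (r / 3, c - (n - q)) ∈ S ↔ r % 3 = 0 then c - (n - q) else q + (c - (n - q)))

lemma combSwap_fst_lt (hn : 3 * q ≤ n) (S : Finset (ℕ × ℕ)) {r : ℕ} (hr : r < n) (c : ℕ) :
    (combSwap n q S r c).1 < n := by
  grind [combSwap]

lemma combSwap_snd_lt (hn : 3 * q ≤ n) (S : Finset (ℕ × ℕ)) (r : ℕ) {c : ℕ} (hc : c < n) :
    (combSwap n q S r c).2 < n := by
  grind [combSwap]

lemma combSwap_combSwap (hn : 3 * q ≤ n) (S : Finset (ℕ × ℕ)) (r : ℕ) {c : ℕ} (hc : c < n) :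
    combSwap n q S (combSwap n q S r c).1 (combSwap n q S r c).2 = (r, c) := by
  grind [combSwap]

lemma combSwap_fst_eq_self_iff {S : Finset (ℕ × ℕ)} {r c : ℕ} :
    (combSwap n q S r c).1 = r ↔
      3 * q ≤ r ∨ if r % 3 = 1 then 2 * q ≤ c else c < n - q := by
  grind [combSwap]

lemma combSwap_fst_of_ne (hn : 3 * q ≤ n) {S : Finset (ℕ × ℕ)} {l r c : ℕ}
    (h : (combSwap n q S r c).1 = l) (hrl : r ≠ l) :
    (combSwap n q S l c).1 = l ∧ (l + 1 = r ∨ r + 1 = l) := by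
  grind [combSwap]

lemma combSwap_fst_tooth_iff {S : Finset (ℕ × ℕ)} {j i : ℕ} (hj : j < q) (hi : i < q) :
    (combSwap n q S (3 * j + 1) i).1 = 3 * j ↔ (j, i) ∈ S := by
  grind [combSwap]

end CombSwap

section CombColoring

variable {n q : ℕ}

/-- `combSwap` as a permutation of the cells of the `n × n` grid. -/
def combPerm (hn : 3 * q ≤ n) (S : Finset (ℕ × ℕ)) : Equiv.Perm (Fin n × Fin n) :=
  Function.Involutive.toPerm
    (fun v => (⟨(combSwap n q S v.1 v.2).1, combSwap_fst_lt hn S v.1.2 v.2⟩,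
      ⟨(combSwap n q S v.1 v.2).2, combSwap_snd_lt hn S v.1 v.2.2⟩))
    (fun v => by simp [combSwap_combSwap hn S v.1 v.2.2])

/-- The colouring whose classes are the parts of the comb partition: the rows, after the exchange
of cells. The spine of part `l` consists of the cells of row `l` that keep the colour `l`. -/
def combColoring (hn : 3 * q ≤ n) (S : Finset (ℕ × ℕ)) (v : Fin n × Fin n) : Fin n :=
  (combPerm hn S v).1

variable (hn : 3 * q ≤ n) (S : Finset (ℕ × ℕ))

lemma val_combColoring (v : Fin n × Fin n) :
    (combColoring hn S v : ℕ) = (combSwap n q S v.1 v.2).1 :=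
  rfl

lemma combColoring_eq_iff {v : Fin n × Fin n} {l : Fin n} :
    combColoring hn S v = l ↔ (combSwap n q S v.1 v.2).1 = l :=
  Fin.ext_iff

lemma ordConnected_combColoring_spine (l : Fin n) :
    {c | combColoring hn S (l, c) = l}.OrdConnected := by
  simp only [combColoring_eq_iff, combSwap_fst_eq_self_iff, Set.ordConnected_def]
  grind

lemma exists_combColoring_spine (l : Fin n) : ∃ c, combColoring hn S (l, c) = l := by
  simp only [combColoring_eq_iff, combSwap_fst_eq_self_iff]
  by_cases hl : (l : ℕ) % 3 = 1
  · exact ⟨⟨n - 1, by omega⟩, by simp [hl]; omega⟩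
  · exact ⟨⟨0, by omega⟩, by simp [hl]; omega⟩

lemma gridGraph_induce_combColoring_connected (l : Fin n) :
    ((gridGraph n).induce
      (Finset.univ.filter (combColoring hn S · = l) : Finset _)).Connected := by
  rw [Finset.coe_filter_univ]
  refine gridGraph_induce_comb_connected (ordConnected_combColoring_spine hn S l)
    (exists_combColoring_spine hn S l) fun v hv hvl => ?_
  obtain ⟨hspine, hadj⟩ := combSwap_fst_of_ne hn ((combColoring_eq_iff hn S).1 hv)
    (Fin.val_ne_of_ne hvl)
  exact ⟨(combColoring_eq_iff hn S).2 hspine, hadj⟩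

lemma isGridPartition_fibers_combColoring : IsGridPartition n (fibers (combColoring hn S)) :=
  isGridPartition_fibers
    (fun l => (card_filter_fst_perm_eq (combPerm hn S) l).trans (Fintype.card_fin n))
    (gridGraph_induce_combColoring_connected hn S)

lemma mem_iff_exists_mem_fibers_combColoring {j i : ℕ} (hj : j < q) (hi : i < q) :
    (j, i) ∈ S ↔ ∃ s ∈ fibers (combColoring hn S),
      (⟨3 * j + 1, by omega⟩, ⟨i, by omega⟩) ∈ s ∧ (⟨3 * j, by omega⟩, ⟨0, by omega⟩) ∈ s := by
  have hcorner : (combSwap n q S (3 * j) 0).1 = 3 * j :=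
    combSwap_fst_eq_self_iff.2 (Or.inr (by simp; omega))
  rw [exists_mem_fibers_iff, combColoring_eq_iff, val_combColoring, hcorner,
    combSwap_fst_tooth_iff hj hi]

lemma injOn_fibers_combColoring :
    Set.InjOn (fun S => fibers (combColoring hn S))
      ((Finset.range q ×ˢ Finset.range q).powerset : Set (Finset (ℕ × ℕ))) := by
  intro S hS T hT hST
  rw [Finset.mem_coe, Finset.mem_powerset] at hS hT
  ext ⟨j, i⟩
  by_cases hji : (j, i) ∈ Finset.range q ×ˢ Finset.range q
  · obtain ⟨hj, hi⟩ := Finset.mem_product.1 hji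
    rw [Finset.mem_range] at hj hi
    rw [mem_iff_exists_mem_fibers_combColoring hn S hj hi,
      mem_iff_exists_mem_fibers_combColoring hn T hj hi]
    simp only [hST]
  · exact iff_of_false (fun h => hji (hS h)) (fun h => hji (hT h))

end CombColoring

lemma two_pow_sq_le_gridPartitionCount {n q : ℕ} (hn : 3 * q ≤ n) :
    2 ^ q ^ 2 ≤ gridPartitionCount n :=
  calc 2 ^ q ^ 2 = ((Finset.range q ×ˢ Finset.range q).powerset : Set (Finset (ℕ × ℕ))).ncard := by
        rw [Set.ncard_coe_finset, Finset.card_powerset, Finset.card_product, Finset.card_range, sq]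
    _ ≤ {P | IsGridPartition n P}.ncard := Set.ncard_le_ncard_of_injOn _
        (fun S _ => isGridPartition_fibers_combColoring hn S) (injOn_fibers_combColoring hn)
    _ = gridPartitionCount n := (gridPartitionCount_eq_ncard n).symm

theorem grid_partition_count_exponential :
    ∃ (c C : ℝ) (N : ℕ), 1 < c ∧ c ≤ C ∧
      ∀ n : ℕ, N ≤ n →
        c ^ (n ^ 2) ≤ (gridPartitionCount n : ℝ) ∧
        (gridPartitionCount n : ℝ) ≤ C ^ (n ^ 2) := by
  refine ⟨51 / 50, 4, 3, by norm_num, by norm_num, fun n hn => ⟨?_, ?_⟩⟩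
  · have hsq : n ^ 2 ≤ 25 * (n / 3) ^ 2 := by
      calc n ^ 2 ≤ (5 * (n / 3)) ^ 2 := Nat.pow_le_pow_left (by omega) 2
        _ = 25 * (n / 3) ^ 2 := by ring
    calc (51 / 50 : ℝ) ^ n ^ 2
        ≤ (51 / 50) ^ (25 * (n / 3) ^ 2) := pow_le_pow_right₀ (by norm_num) hsq
      _ = ((51 / 50) ^ 25) ^ (n / 3) ^ 2 := pow_mul _ _ _
      _ ≤ 2 ^ (n / 3) ^ 2 := pow_le_pow_left₀ (by norm_num) (by norm_num) _
      _ ≤ gridPartitionCount n := by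
        exact_mod_cast two_pow_sq_le_gridPartitionCount (Nat.mul_div_le n 3)
  · exact_mod_cast gridPartitionCount_le n
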